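/- Fix 1 ≤ n ≤ d and define p_n*(i) = λ(i^{(1)})^{s_1}·Π_{ℓ=2}^n λ(i^{(ℓ)})^{s_ℓ−s_{ℓ−1}} for i ∈ I_n, which is a probability vector on I_n by the defining equations of the s_n. Then for every probability vector p on I_n, H(p) ≤ Σ_{ℓ=1}^n (s_ℓ − s_{ℓ−1})·χ_ℓ(p), with equality if and only if p = p_n*. -/

import Mathlib

/-!
Taking the logarithm of the product `p_n^*` shows that `∑ ℓ, (s ℓ - s (ℓ - 1)) * χ_ℓ(p)` is the
cross entropy `-∑ i, p i * log (p_n^* i)`, so the claim is Gibbs' inequality for `p` against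
`q = p_n^*`. The gap in Gibbs' inequality is `∑ i, q i * klFun (p i / q i)` up to the difference of
the total masses, where `klFun x = x log x + 1 - x` is nonnegative on `[0, ∞)` and vanishes only
at `1`.
-/

open Real Finset Filter

noncomputable section

/-- Index sets of a Gatzouras–Lalley structure. -/
def glIdx (Nf : List ℕ → ℕ) : ℕ → Finset (List ℕ)
  | 0 => {[]}
  | n + 1 => (glIdx Nf n).biUnion fun u =>
      (Finset.range (Nf u)).image fun j => u ++ [j + 1]

/-- Entropy of a vector `p` on index set `I`. -/
def glEnt (I : Finset (List ℕ)) (p : List ℕ → ℝ) : ℝ :=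
  -∑ i ∈ I, p i * Real.log (p i)

/-- Lyapunov exponent `χ_ℓ(p)` for `p` on index set `I`. -/
def glLyap (lam : List ℕ → ℝ) (I : Finset (List ℕ)) (ℓ : ℕ) (p : List ℕ → ℝ) : ℝ :=
  -∑ i ∈ I, p i * Real.log (lam (i.take ℓ))

def IsProbVec (I : Finset (List ℕ)) (p : List ℕ → ℝ) : Prop :=
  (∀ i ∈ I, 0 ≤ p i) ∧ ∑ i ∈ I, p i = 1

/-- `glCaux d χ k = C^{(d)}_{d-k}`, defined by downward recursion. -/
def glCaux (d : ℕ) (chi : ℕ → ℕ → ℝ) : ℕ → ℝ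
  | k => (1 - ∑ j ∈ (Finset.range k).attach,
        glCaux d chi j.1 * chi (d - k) (d - j.1)) / chi (d - k) (d - k)
decreasing_by exact Finset.mem_range.mp j.2

/-- The coefficient `C_n^{(d)}(P)`. -/
def glC (d : ℕ) (lam : List ℕ → ℝ) (Nf : List ℕ → ℕ) (P : ℕ → List ℕ → ℝ) (n : ℕ) : ℝ :=
  glCaux d (fun a m => glLyap lam (glIdx Nf m) a (P m)) (d - n)

/-- Smallest number of sets of diameter at most `δ` needed to cover `Λ`. -/
def coverNum {E : Type*} [EMetricSpace E] (Λ : Set E) (δ : ℝ) : ℕ :=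
  sInf {m : ℕ | ∃ U : Fin m → Set E,
    (∀ k, EMetric.diam (U k) ≤ ENNReal.ofReal δ) ∧ Λ ⊆ ⋃ k, U k}

/-- The affine map `S_i` of a Gatzouras–Lalley system. -/
def glMap (d : ℕ) (lam t : List ℕ → ℝ) (i : List ℕ) (x : EuclideanSpace ℝ (Fin d)) :
    EuclideanSpace ℝ (Fin d) :=
  WithLp.toLp 2 fun k => lam (i.take ((k : ℕ) + 1)) * x k + t (i.take ((k : ℕ) + 1))

def openCube (d : ℕ) : Set (EuclideanSpace ℝ (Fin d)) := {x | ∀ k, x k ∈ Set.Ioo (0:ℝ) 1}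

def closedCube (d : ℕ) : Set (EuclideanSpace ℝ (Fin d)) := {x | ∀ k, x k ∈ Set.Icc (0:ℝ) 1}


/-- The probability vector `p_n^*` on `I_n`. -/
def glPstar (lam : List ℕ → ℝ) (s : ℕ → ℝ) (n : ℕ) (i : List ℕ) : ℝ :=
  ∏ ℓ ∈ Finset.Icc 1 n, lam (i.take ℓ) ^ (s ℓ - s (ℓ - 1))

open InformationTheory

section Gibbs

theorem mul_klFun_div (x : ℝ) {y : ℝ} (hy : y ≠ 0) :
    y * klFun (x / y) = x * log x - x * log y + (y - x) := by
  obtain rfl | hx := eq_or_ne x 0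
  · simp [klFun_zero]
  · rw [klFun_apply, log_div hx hy]
    field

theorem mul_klFun_div_nonneg {x y : ℝ} (hx : 0 ≤ x) (hy : 0 < y) : 0 ≤ y * klFun (x / y) :=
  mul_nonneg hy.le (klFun_nonneg (by positivity))

theorem mul_klFun_div_eq_zero_iff {x y : ℝ} (hx : 0 ≤ x) (hy : 0 < y) :
    y * klFun (x / y) = 0 ↔ x = y := by
  rw [mul_eq_zero_iff_left hy.ne', klFun_eq_zero_iff (by positivity), div_eq_one_iff_eq hy.ne']

variable {ι : Type*} {I : Finset ι} {p q : ι → ℝ}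

theorem sum_mul_klFun_div (hq : ∀ i ∈ I, q i ≠ 0) :
    ∑ i ∈ I, q i * klFun (p i / q i) =
      ∑ i ∈ I, p i * log (p i) - ∑ i ∈ I, p i * log (q i) + (∑ i ∈ I, q i - ∑ i ∈ I, p i) := by
  simp only [← sum_sub_distrib, ← sum_add_distrib]
  exact sum_congr rfl fun i hi => mul_klFun_div (p i) (hq i hi)

theorem sum_mul_log_le_sum_mul_log_self (hp : ∀ i ∈ I, 0 ≤ p i) (hq : ∀ i ∈ I, 0 < q i)
    (hqp : ∑ i ∈ I, q i ≤ ∑ i ∈ I, p i) :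
    ∑ i ∈ I, p i * log (q i) ≤ ∑ i ∈ I, p i * log (p i) := by
  have gap_nonneg := sum_nonneg fun i hi => mul_klFun_div_nonneg (hp i hi) (hq i hi)
  rw [sum_mul_klFun_div fun i hi => (hq i hi).ne'] at gap_nonneg
  linarith

theorem sum_mul_log_eq_sum_mul_log_self_iff (hp : ∀ i ∈ I, 0 ≤ p i) (hq : ∀ i ∈ I, 0 < q i)
    (hqp : ∑ i ∈ I, q i ≤ ∑ i ∈ I, p i) :
    ∑ i ∈ I, p i * log (q i) = ∑ i ∈ I, p i * log (p i) ↔ ∀ i ∈ I, p i = q i := by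
  refine ⟨fun h => ?_, fun h => sum_congr rfl fun i hi => by rw [h i hi]⟩
  have term_nonneg : ∀ i ∈ I, 0 ≤ q i * klFun (p i / q i) :=
    fun i hi => mul_klFun_div_nonneg (hp i hi) (hq i hi)
  have gap_eq_zero : ∑ i ∈ I, q i * klFun (p i / q i) = 0 := by
    refine le_antisymm ?_ (sum_nonneg term_nonneg)
    rw [sum_mul_klFun_div fun i hi => (hq i hi).ne']
    linarith
  intro i hi
  rw [← mul_klFun_div_eq_zero_iff (hp i hi) (hq i hi)]
  exact (sum_eq_zero_iff_of_nonneg term_nonneg).1 gap_eq_zero i hi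

end Gibbs

section IndexSets

variable {Nf : List ℕ → ℕ} {n : ℕ} {i : List ℕ}

theorem mem_glIdx_succ :
    i ∈ glIdx Nf (n + 1) ↔ ∃ u ∈ glIdx Nf n, ∃ j < Nf u, u ++ [j + 1] = i := by
  simp [glIdx]

theorem length_of_mem_glIdx (hi : i ∈ glIdx Nf n) : i.length = n := by
  induction n generalizing i with
  | zero => simp_all [glIdx]
  | succ n ih =>
    obtain ⟨u, hu, j, -, rfl⟩ := mem_glIdx_succ.1 hi
    simp [ih hu]

theorem take_mem_glIdx {ℓ : ℕ} (hi : i ∈ glIdx Nf n) (hℓ : ℓ ≤ n) : i.take ℓ ∈ glIdx Nf ℓ := by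
  induction n, hℓ using Nat.le_induction generalizing i with
  | base => rwa [List.take_of_length_le (length_of_mem_glIdx hi).le]
  | succ n hℓ ih =>
    obtain ⟨u, hu, j, -, rfl⟩ := mem_glIdx_succ.1 hi
    rw [List.take_append_of_le_length (hℓ.trans_eq (length_of_mem_glIdx hu).symm)]
    exact ih hu

end IndexSets

section CrossEntropy

variable {lam : List ℕ → ℝ} {s : ℕ → ℝ} {n : ℕ} {i : List ℕ}

theorem glPstar_pos (hlam : ∀ ℓ ∈ Icc 1 n, 0 < lam (i.take ℓ)) : 0 < glPstar lam s n i :=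
  prod_pos fun ℓ hℓ => rpow_pos_of_pos (hlam ℓ hℓ) _

theorem log_glPstar (hlam : ∀ ℓ ∈ Icc 1 n, 0 < lam (i.take ℓ)) :
    log (glPstar lam s n i) = ∑ ℓ ∈ Icc 1 n, (s ℓ - s (ℓ - 1)) * log (lam (i.take ℓ)) := by
  rw [glPstar, log_prod fun ℓ hℓ => (rpow_pos_of_pos (hlam ℓ hℓ) _).ne']
  exact sum_congr rfl fun ℓ hℓ => log_rpow (hlam ℓ hℓ) _

theorem sum_mul_glLyap (c : ℕ → ℝ) (L : Finset ℕ) (lam : List ℕ → ℝ) (I : Finset (List ℕ))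
    (p : List ℕ → ℝ) :
    ∑ ℓ ∈ L, c ℓ * glLyap lam I ℓ p =
      -∑ i ∈ I, p i * ∑ ℓ ∈ L, c ℓ * log (lam (i.take ℓ)) := by
  simp only [glLyap, mul_neg, sum_neg_distrib, mul_sum, mul_left_comm]
  rw [sum_comm]

theorem sum_mul_glLyap_eq_neg_sum_mul_log_glPstar {I : Finset (List ℕ)}
    (hlam : ∀ i ∈ I, ∀ ℓ ∈ Icc 1 n, 0 < lam (i.take ℓ)) (p : List ℕ → ℝ) :
    ∑ ℓ ∈ Icc 1 n, (s ℓ - s (ℓ - 1)) * glLyap lam I ℓ p =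
      -∑ i ∈ I, p i * log (glPstar lam s n i) := by
  rw [sum_mul_glLyap]
  exact congrArg Neg.neg (sum_congr rfl fun i hi => by rw [log_glPstar (hlam i hi)])

end CrossEntropy

theorem entropy_le_weighted_lyap_general {I : Finset (List ℕ)} {lam : List ℕ → ℝ} {s : ℕ → ℝ}
    {n : ℕ} (hlam : ∀ i ∈ I, ∀ ℓ ∈ Icc 1 n, 0 < lam (i.take ℓ))
    (hs : ∑ i ∈ I, glPstar lam s n i ≤ 1) {p : List ℕ → ℝ} (hp : IsProbVec I p) :
    glEnt I p ≤ ∑ ℓ ∈ Icc 1 n, (s ℓ - s (ℓ - 1)) * glLyap lam I ℓ p ∧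
    (glEnt I p = ∑ ℓ ∈ Icc 1 n, (s ℓ - s (ℓ - 1)) * glLyap lam I ℓ p ↔
      ∀ i ∈ I, p i = glPstar lam s n i) := by
  obtain ⟨p_nonneg, sum_p⟩ := hp
  have pstar_pos : ∀ i ∈ I, 0 < glPstar lam s n i := fun i hi => glPstar_pos (hlam i hi)
  have mass_le := hs.trans_eq sum_p.symm
  rw [sum_mul_glLyap_eq_neg_sum_mul_log_glPstar hlam, glEnt, neg_le_neg_iff, neg_inj, eq_comm]
  exact ⟨sum_mul_log_le_sum_mul_log_self p_nonneg pstar_pos mass_le,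
    sum_mul_log_eq_sum_mul_log_self_iff p_nonneg pstar_pos mass_le⟩

/-- For `1 ≤ n ≤ d` and every probability vector `p` on `I_n`,
`H(p) ≤ ∑_{ℓ=1}^n (s_ℓ - s_{ℓ-1})·χ_ℓ(p)`, with equality iff `p = p_n^*`. -/
theorem entropy_le_weighted_lyap
    (d : ℕ) (hd : 1 ≤ d)
    (Nf : List ℕ → ℕ) (hN : 2 ≤ Nf [])
    (hNf : ∀ n < d, ∀ u ∈ glIdx Nf n, 1 ≤ Nf u)
    (lam : List ℕ → ℝ)
    (hlam : ∀ n, 1 ≤ n → n ≤ d → ∀ i ∈ glIdx Nf n, lam i ∈ Set.Ioo (0:ℝ) 1)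
    (s : ℕ → ℝ) (hs0 : s 0 = 0)
    (hs : ∀ n, 1 ≤ n → n ≤ d →
      ∑ i ∈ glIdx Nf n, ∏ ℓ ∈ Finset.Icc 1 n, lam (i.take ℓ) ^ (s ℓ - s (ℓ - 1)) = 1)
    (n : ℕ) (hn1 : 1 ≤ n) (hnd : n ≤ d)
    (p : List ℕ → ℝ) (hp : IsProbVec (glIdx Nf n) p) :
    glEnt (glIdx Nf n) p ≤
      ∑ ℓ ∈ Finset.Icc 1 n, (s ℓ - s (ℓ - 1)) * glLyap lam (glIdx Nf n) ℓ p ∧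
    (glEnt (glIdx Nf n) p =
        ∑ ℓ ∈ Finset.Icc 1 n, (s ℓ - s (ℓ - 1)) * glLyap lam (glIdx Nf n) ℓ p ↔
      ∀ i ∈ glIdx Nf n, p i = glPstar lam s n i) :=
  entropy_le_weighted_lyap_general (fun _ hi ℓ hℓ => by
    obtain ⟨one_le, le_n⟩ := mem_Icc.1 hℓ
    exact (hlam ℓ one_le (le_n.trans hnd) _ (take_mem_glIdx hi le_n)).1) (hs n hn1 hnd).le hp
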